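/- arXiv:2105.10677 — 2 statements merged into one kernel-verified Lean document; each statement's English description precedes it below -/
import Mathlib

section
/- Let 1 ≤ p < q ≤ m with 1 < q − p < m − 1. Let φ be an anonymous (p, q)-PFBR on [D_≺(p, q)]^n and suppose φ(P) = Σ_{k=1}^r α^k e_{f^k(P)} for all profiles P, where each f^k is a (p, q)-FBR with constrained dictator i^k and α^1, …, α^r > 0 with Σ_{k=1}^r α^k = 1. Then for every voter i ∈ N, the total weight of the FBRs whose constrained dictator is i equals 1/n: Σ_{k : i^k = i} α^k = 1/n. -/
open Finset

noncomputable section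

/-- A preference is a linear order over the `m` alternatives, represented as a bijection
from rank positions (0-based: position `0` is the top) to alternatives. -/
abbrev Pref (m : ℕ) := Fin m ≃ Fin m

namespace PFBRPaper

variable {m n : ℕ}

/-- `a` is strictly preferred to `b` under `P`. -/
def Prefers (P : Pref m) (a b : Fin m) : Prop := P.symm a < P.symm b

/-- The last alternative `a_m` (0-based index `m-1`). -/
def lastAlt (m : ℕ) [NeZero m] : Fin m :=
  ⟨m - 1, Nat.sub_lt (Nat.pos_of_ne_zero (NeZero.ne m)) Nat.one_pos⟩

/-- Every alternative is top-ranked by some preference in the domain. -/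
def MinimallyRich [NeZero m] (D : Set (Pref m)) : Prop :=
  ∀ a : Fin m, ∃ P ∈ D, P 0 = a

/-- The preference ranking `a_m` first, ..., `a_1` last. -/
def revPref (m : ℕ) : Pref m :=
  ⟨Fin.rev, Fin.rev, fun i => Fin.rev_rev i, fun i => Fin.rev_rev i⟩

/-- Diversity, with the labeling convention: the domain contains the preference ranking
`a_1` first, `a_2` second, ..., `a_m` last (the identity), together with its
complete reversal. -/
def Diversity (D : Set (Pref m)) : Prop :=
  Equiv.refl (Fin m) ∈ D ∧ revPref m ∈ D

/-- Two preferences are adjacent: the alternatives at two contiguous rank positions are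
swapped and everything else is unchanged. -/
def Adjacent (P P' : Pref m) : Prop :=
  P ≠ P' ∧ ∃ k : ℕ, ∃ hk : k + 1 < m,
    P ⟨k, Nat.lt_of_succ_lt hk⟩ = P' ⟨k + 1, hk⟩ ∧
    P ⟨k + 1, hk⟩ = P' ⟨k, Nat.lt_of_succ_lt hk⟩ ∧
    ∀ l : Fin m, (l : ℕ) ≠ k → (l : ℕ) ≠ k + 1 → P l = P' l

/-- `π 0, …, π (v-1)` is a path in `D` connecting `P` and `P'`. -/
def IsPath (D : Set (Pref m)) (P P' : Pref m) (π : ℕ → Pref m) (v : ℕ) : Prop :=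
  1 ≤ v ∧ (∀ i < v, π i ∈ D) ∧
  (∀ i < v, ∀ j < v, π i = π j → i = j) ∧
  π 0 = P ∧ π (v - 1) = P' ∧
  ∀ i, i + 1 < v → Adjacent (π i) (π (i + 1))

/-- The path `π 0, …, π (v-1)` has no `{a,b}`-restoration: the relative ranking of
`a` and `b` switches at most once along the path. -/
def NoRestoration (π : ℕ → Pref m) (v : ℕ) (a b : Fin m) : Prop :=
  ∀ i j k : ℕ, i < j → j < k → k < v →
    ¬(Prefers (π i) a b ∧ Prefers (π j) b a ∧ Prefers (π k) a b) ∧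
    ¬(Prefers (π i) b a ∧ Prefers (π j) a b ∧ Prefers (π k) b a)

def NoRestorationDomain (D : Set (Pref m)) : Prop :=
  ∀ P ∈ D, ∀ P' ∈ D, P ≠ P' → ∀ a b : Fin m,
    ∃ π v, IsPath D P P' π v ∧ NoRestoration π v a b

def RegularDomain [NeZero m] (D : Set (Pref m)) : Prop :=
  MinimallyRich D ∧ Diversity D ∧ NoRestorationDomain D

/-- `a ≈ b`: the two alternatives are strongly connected in the domain `D`. -/
def StronglyConnected [NeZero m] (D : Set (Pref m)) (a b : Fin m) : Prop :=
  a ≠ b ∧ ∃ P ∈ D, ∃ P' ∈ D,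
    P 0 = a ∧ P 1 = b ∧ P' 0 = b ∧ P' 1 = a ∧
    ∀ k : Fin m, 2 ≤ (k : ℕ) → P k = P' k

/-- `l` is a vertex-path of the graph `G_≈^B(D)`. -/
def IsVertexPathOn [NeZero m] (D : Set (Pref m)) (B : Set (Fin m)) (l : List (Fin m)) : Prop :=
  l ≠ [] ∧ l.Nodup ∧ (∀ x ∈ l, x ∈ B) ∧ l.Chain' (StronglyConnected D)

/-- `l` is a vertex-path of `G_≈^B(D)` connecting `a` and `b`. -/
def VertexPathBetween [NeZero m] (D : Set (Pref m)) (B : Set (Fin m)) (a b : Fin m)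
    (l : List (Fin m)) : Prop :=
  IsVertexPathOn D B l ∧ l.head? = some a ∧ l.getLast? = some b

/-- `a` is a leaf of the subgraph `G_≈^B(D)`. -/
def IsLeaf [NeZero m] (D : Set (Pref m)) (B : Set (Fin m)) (a : Fin m) : Prop :=
  a ∈ B ∧ ∃! b : Fin m, b ∈ B ∧ StronglyConnected D a b

/-- Single-peakedness w.r.t. the natural order. -/
def SinglePeaked [NeZero m] (P : Pref m) : Prop :=
  ∀ a b : Fin m, ((a < b ∧ b < P 0) ∨ (P 0 < b ∧ b < a)) → Prefers P b a

/-- A `(p,q)`-hybrid preference (thresholds `p < q`, 0-based). -/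
def IsHybridPref [NeZero m] (p q : Fin m) (P : Pref m) : Prop :=
  (∀ r s : Fin m, ((r ≤ p ∧ s ≤ p) ∨ (q ≤ r ∧ q ≤ s)) →
      ((r < s ∧ s < P 0) ∨ (P 0 < s ∧ s < r)) → Prefers P s r) ∧
  (P 0 ≤ p → ∀ l : Fin m, p ≤ l → l ≤ q → l ≠ p → Prefers P p l) ∧
  (q ≤ P 0 → ∀ l : Fin m, p ≤ l → l ≤ q → l ≠ q → Prefers P q l)

/-- The `(p,q)`-hybrid domain of all `(p,q)`-hybrid preferences. -/
def hybridDomain [NeZero m] (p q : Fin m) : Set (Pref m) := {P | IsHybridPref p q P}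

/-- `D` is a `(p,q)`-hybrid* domain. -/
def IsHybridStar [NeZero m] (D : Set (Pref m)) (p q : Fin m) : Prop :=
  D ⊆ hybridDomain p q ∧
  (∀ k : Fin m, k ≠ 0 → k ≠ lastAlt m →
      ∃ l, VertexPathBetween D Set.univ 0 (lastAlt m) l ∧ k ∈ l) ∧
  ((p : ℕ) + 1 < (q : ℕ) → ∀ a : Fin m, ¬ IsLeaf D (Set.Icc p q) a)

/-- A lottery over the alternatives. -/
def Lottery (m : ℕ) : Type :=
  {f : Fin m → ℝ // (∀ a, 0 ≤ f a) ∧ ∑ a, f a = 1}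

/-- The probability that a lottery assigns to a set of alternatives. -/
def Lottery.prob (lam : Lottery m) (B : Finset (Fin m)) : ℝ := ∑ a ∈ B, lam.1 a

/-- The support of a lottery. -/
def Lottery.supp (lam : Lottery m) : Finset (Fin m) :=
  Finset.univ.filter (fun a => 0 < lam.1 a)

/-- The degenerate lottery on `a`. -/
def degLottery (a : Fin m) : Lottery m :=
  ⟨fun b => if b = a then 1 else 0,
   fun b => by by_cases h : b = a <;> simp [h],
   by simp⟩

/-- A profile of preferences drawn from the domain `D`. -/
abbrev Profile (D : Set (Pref m)) (n : ℕ) := Fin n → D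

/-- The top-ranked alternative of a preference in the domain. -/
def topOf [NeZero m] {D : Set (Pref m)} (P : D) : Fin m := P.1 0

def Unanimous [NeZero m] {D : Set (Pref m)} (φ : Profile D n → Lottery m) : Prop :=
  ∀ (P : Profile D n) (a : Fin m), (∀ i, topOf (P i) = a) → φ P = degLottery a

/-- The total probability of the `k` top-ranked alternatives of `P` under `lam`. -/
def topSum (lam : Lottery m) (P : Pref m) (k : ℕ) : ℝ :=
  ∑ t ∈ Finset.univ.filter (fun t : Fin m => (t : ℕ) < k), lam.1 (P t)

/-- Strategy-proofness: truth-telling first-order stochastically dominates any unilateral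
misrepresentation. -/
def StrategyProof {D : Set (Pref m)} (φ : Profile D n → Lottery m) : Prop :=
  ∀ (i : Fin n) (P : Profile D n) (Pi' : D) (k : ℕ), k ≤ m →
    topSum (φ (Function.update P i Pi')) (P i).1 k ≤ topSum (φ P) (P i).1 k

def TopsOnly [NeZero m] {D : Set (Pref m)} (φ : Profile D n → Lottery m) : Prop :=
  ∀ P P' : Profile D n, (∀ i, topOf (P i) = topOf (P' i)) → φ P = φ P'

def Anonymous {D : Set (Pref m)} (φ : Profile D n → Lottery m) : Prop :=
  ∀ (P : Profile D n) (σ : Equiv.Perm (Fin n)), φ (P ∘ σ) = φ P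

/-- The interval `[a_k, a_m]`. -/
def upSet (k : Fin m) : Finset (Fin m) := Finset.univ.filter (fun a => k ≤ a)

/-- The interval `[a_1, a_k]`. -/
def downSet (k : Fin m) : Finset (Fin m) := Finset.univ.filter (fun a => a ≤ k)

/-- The interval `[a_p, a_q]`. -/
def midSet (p q : Fin m) : Finset (Fin m) := Finset.univ.filter (fun a => p ≤ a ∧ a ≤ q)

/-- `S(k,P)`: the voters whose preference top is not to the left of `a_k`. -/
def voterSet [NeZero m] {D : Set (Pref m)} (P : Profile D n) (k : Fin m) : Finset (Fin n) :=
  Finset.univ.filter (fun i => k ≤ topOf (P i))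

/-- `β_{S(k,P)}([a_k, a_m])`, with the convention that it is `0` for `k = m`. -/
def tailProb [NeZero m] {D : Set (Pref m)} (β : Finset (Fin n) → Lottery m)
    (P : Profile D n) (k : ℕ) : ℝ :=
  if h : k < m then (β (voterSet P ⟨k, h⟩)).prob (upSet ⟨k, h⟩) else 0

def BallotUnanimity [NeZero m] (β : Finset (Fin n) → Lottery m) : Prop :=
  β Finset.univ = degLottery (lastAlt m) ∧ β ∅ = degLottery 0

def BallotMonotone (β : Finset (Fin n) → Lottery m) : Prop :=
  ∀ S T : Finset (Fin n), S ⊂ T →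
    ∀ k : Fin m, (β S).prob (upSet k) ≤ (β T).prob (upSet k)

/-- `φ` is a probabilistic fixed ballot rule with probabilistic ballots `β`. -/
def IsPFBRWith [NeZero m] {D : Set (Pref m)} (φ : Profile D n → Lottery m)
    (β : Finset (Fin n) → Lottery m) : Prop :=
  BallotUnanimity β ∧ BallotMonotone β ∧
  ∀ (P : Profile D n) (k : Fin m),
    (φ P).1 k = tailProb β P (k : ℕ) - tailProb β P ((k : ℕ) + 1)

def IsPFBR [NeZero m] {D : Set (Pref m)} (φ : Profile D n → Lottery m) : Prop :=
  ∃ β, IsPFBRWith φ β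

/-- The constrained random-dictatorship condition w.r.t. `a_p` and `a_q`. -/
def ConstrainedRD (p q : Fin m) (β : Finset (Fin n) → Lottery m) : Prop :=
  ∃ ε : Fin n → ℝ, (∀ i, 0 ≤ ε i) ∧ ∑ i, ε i = 1 ∧
    ∀ S : Finset (Fin n),
      (β S).prob (upSet q) = ∑ i ∈ S, ε i ∧
      (β S).prob (downSet p) = ∑ i ∈ Sᶜ, ε i

/-- The constrained random-dictatorship condition w.r.t. `a_p` and `a_q` with every
conditional dictatorial coefficient equal to `1/n`. -/
def ConstrainedRDUniform (p q : Fin m) (β : Finset (Fin n) → Lottery m) : Prop :=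
  ∀ S : Finset (Fin n),
    (β S).prob (upSet q) = (S.card : ℝ) / (n : ℝ) ∧
    (β S).prob (downSet p) = ((Sᶜ : Finset (Fin n)).card : ℝ) / (n : ℝ)

/-- Anonymity at the level of probabilistic ballots. -/
def BallotAnonymous (β : Finset (Fin n) → Lottery m) : Prop :=
  ∀ S S' : Finset (Fin n), S.Nonempty → S'.Nonempty → S.card = S'.card → β S = β S'

/-- Per-capita monotonicity w.r.t. `a_p` and `a_q`. -/
def PerCapitaMonotone (p q : Fin m) (β : Finset (Fin n) → Lottery m) : Prop :=
  ∀ S S' : Finset (Fin n), S.Nonempty → S ⊂ S' → S' ⊂ Finset.univ →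
    (∀ t : Fin m, q ≤ t →
      (β S).prob (upSet t) / (S.card : ℝ) ≤ (β S').prob (upSet t) / (S'.card : ℝ)) ∧
    (∀ s : Fin m, s ≤ p →
      (β Sᶜ).prob (downSet s) / (S.card : ℝ) ≤ (β S'ᶜ).prob (downSet s) / (S'.card : ℝ))

/-- Decomposability: `φ` is a mixture of finitely many unanimous and strategy-proof
deterministic social choice functions. -/
def Decomposable [NeZero m] {D : Set (Pref m)} (φ : Profile D n → Lottery m) : Prop :=
  ∃ (r : ℕ) (f : Fin r → (Profile D n → Fin m)) (α : Fin r → ℝ),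
    (∀ k, 0 < α k) ∧ ∑ k, α k = 1 ∧
    (∀ k, Unanimous (fun P => degLottery (f k P)) ∧
          StrategyProof (fun P => degLottery (f k P))) ∧
    ∀ (P : Profile D n) (a : Fin m),
      (φ P).1 a = ∑ k, α k * (if f k P = a then 1 else 0)

/-- `b̂_S^R`: the `≺`-minimum of `supp(β_S) ∩ R` (with the convention `b̂_N^R = a_m`). -/
def bR [NeZero m] (β : Finset (Fin n) → Lottery m) (q : Fin m) (S : Finset (Fin n)) : Fin m :=
  if h : ((β S).supp ∩ upSet q).Nonempty then ((β S).supp ∩ upSet q).min' h else lastAlt m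

/-- `b̂_S^L`: the `≺`-maximum of `supp(β_S) ∩ L` (with the convention `b̂_∅^L = a_1`). -/
def bL [NeZero m] (β : Finset (Fin n) → Lottery m) (p : Fin m) (S : Finset (Fin n)) : Fin m :=
  if h : ((β S).supp ∩ downSet p).Nonempty then ((β S).supp ∩ downSet p).max' h else 0

/-- `α = min over nonempty S ⊂ N of min(β_S(b̂_S^R)/|S|, β_S(b̂_S^L)/(n-|S|))`. -/
def alphaVal [NeZero m] (β : Finset (Fin n) → Lottery m) (p q : Fin m) : ℝ :=
  sInf {x : ℝ | ∃ S : Finset (Fin n), S.Nonempty ∧ S ≠ Finset.univ ∧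
    x = min ((β S).1 (bR β q S) / (S.card : ℝ))
            ((β S).1 (bL β p S) / ((n : ℝ) - (S.card : ℝ)))}

/-- `γ_S = (|S|/n) e_{b̂_S^R} + ((n-|S|)/n) e_{b̂_S^L}`, pointwise. -/
def gammaFun [NeZero m] (β : Finset (Fin n) → Lottery m) (p q : Fin m)
    (S : Finset (Fin n)) (a : Fin m) : ℝ :=
  ((S.card : ℝ) / (n : ℝ)) * (if a = bR β q S then 1 else 0)
  + (((n : ℝ) - (S.card : ℝ)) / (n : ℝ)) * (if a = bL β p S then 1 else 0)

/-- The max-min formula `f(P) = max_{S ⊆ N} min({r_1(P_j) : j ∈ S} ∪ {b_S})`. -/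
def fbrOutcome [NeZero m] {D : Set (Pref m)} (b : Finset (Fin n) → Fin m)
    (P : Profile D n) : Fin m :=
  Finset.univ.sup' Finset.univ_nonempty
    (fun S : Finset (Fin n) =>
      (insert (b S) (S.image (fun j => topOf (P j)))).inf' (Finset.insert_nonempty _ _) id)

/-- `f` is a `(p,q)`-fixed ballot rule with deterministic ballots `b` and constrained
dictator `i`. -/
def IsFBRWith [NeZero m] {D : Set (Pref m)} (p q : Fin m) (f : Profile D n → Fin m)
    (b : Finset (Fin n) → Fin m) (i : Fin n) : Prop :=
  b Finset.univ = lastAlt m ∧ b ∅ = 0 ∧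
  (∀ S T : Finset (Fin n), S ⊂ T → b S ≤ b T) ∧
  (∀ S : Finset (Fin n), (i ∈ S → q ≤ b S) ∧ (i ∉ S → b S ≤ p)) ∧
  ∀ P : Profile D n, f P = fbrOutcome b P

end PFBRPaper

open PFBRPaper

theorem refl_hybrid {m : ℕ} [NeZero m] (p q : Fin m) (h : (p : ℕ) + 1 < (q : ℕ)) :
    Equiv.refl (Fin m) ∈ hybridDomain p q := by
  refine ⟨?_, ?_, ?_⟩
  · rintro r s - (⟨_, h2⟩ | ⟨_, h2⟩)
    · exact absurd h2 (by simp)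
    · exact h2
  · intro _ l h1 _ h3
    exact lt_of_le_of_ne h1 (Ne.symm h3)
  · intro h1
    exfalso
    have h2 : (q : ℕ) ≤ 0 := by simpa [Fin.le_def] using h1
    omega

theorem rev_hybrid {m : ℕ} [NeZero m] (p q : Fin m) (h : (p : ℕ) + 1 < (q : ℕ)) :
    revPref m ∈ hybridDomain p q := by
  have h0 : ((revPref m 0 : Fin m) : ℕ) = m - 1 := by
    simp [revPref, Fin.val_rev]
  refine ⟨?_, ?_, ?_⟩
  · rintro r s - (⟨h1, h2⟩ | ⟨h1, h2⟩)
    · exact Fin.rev_lt_rev.2 h1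
    · exfalso
      rw [Fin.lt_def, h0] at h1
      have := s.2
      omega
  · intro h1
    exfalso
    rw [Fin.le_def, h0] at h1
    have := q.2
    omega
  · intro _ l _ h2 h3
    exact Fin.rev_lt_rev.2 (lt_of_le_of_ne h2 h3)

/-- Voter `i` tops the last alternative, all the others the first one. -/
def oneProf {m n : ℕ} [NeZero m] (p q : Fin m) (h : (p : ℕ) + 1 < (q : ℕ)) (i : Fin n) :
    Profile (hybridDomain p q) n :=
  fun j => if j = i then ⟨revPref m, rev_hybrid p q h⟩ else ⟨Equiv.refl _, refl_hybrid p q h⟩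

theorem fbr_one {m n : ℕ} [NeZero m] (p q : Fin m) (h : (p : ℕ) + 1 < (q : ℕ)) (i d : Fin n)
    (f : Profile (hybridDomain p q) n → Fin m) (b : Finset (Fin n) → Fin m)
    (hf : IsFBRWith p q f b d) : q ≤ f (oneProf p q h i) ↔ d = i := by
  obtain ⟨-, -, -, hd, hf⟩ := hf
  rw [hf]
  constructor
  · intro hq
    by_contra hne
    have : fbrOutcome b (oneProf p q h i) ≤ p := by
      apply Finset.sup'_le
      intro S _
      by_cases hS : d ∈ S
      · have h0 : topOf (oneProf p q h i d) = 0 := by simp [oneProf, hne, topOf]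
        refine (Finset.inf'_le id (b := topOf (oneProf p q h i d)) ?_).trans ?_
        · exact Finset.mem_insert_of_mem (Finset.mem_image_of_mem _ hS)
        · rw [h0]; exact Fin.zero_le _
      · exact (Finset.inf'_le id (Finset.mem_insert_self _ _)).trans ((hd S).2 hS)
    have h2 := hq.trans this
    rw [Fin.le_def] at h2
    omega
  · rintro rfl
    refine le_trans ?_ (Finset.le_sup' _ (Finset.mem_univ {d}))
    apply Finset.le_inf'
    intro x hx
    rw [Finset.mem_insert] at hx
    rcases hx with rfl | hx
    · exact (hd {d}).1 (Finset.mem_singleton_self d)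
    · simp only [Finset.image_singleton, Finset.mem_singleton] at hx
      subst hx
      have h0 : ((revPref m 0 : Fin m) : ℕ) = m - 1 := by
        simp [revPref, Fin.val_rev]
      simp only [oneProf, topOf, if_true, id]
      rw [Fin.le_def, h0]
      have := q.2
      omega

/-- In any decomposition of an anonymous `(p,q)`-PFBR into `(p,q)`-FBRs,
each voter is the constrained dictator with total weight exactly `1/n`. -/
theorem dictator_weights (m n : ℕ) [NeZero m] (hm : 3 ≤ m) (hn : 2 ≤ n)
    (p q : Fin m) (hgap1 : (p : ℕ) + 1 < (q : ℕ)) (hgap2 : (q : ℕ) - (p : ℕ) < m - 1)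
    (φ : Profile (hybridDomain p q) n → Lottery m)
    (β : Finset (Fin n) → Lottery m)
    (hβ : IsPFBRWith φ β) (hcrd : ConstrainedRD p q β) (hanon : Anonymous φ)
    (r : ℕ) (f : Fin r → (Profile (hybridDomain p q) n → Fin m))
    (b : Fin r → (Finset (Fin n) → Fin m)) (dict : Fin r → Fin n)
    (α : Fin r → ℝ) (hα : ∀ k, 0 < α k) (hsum : ∑ k, α k = 1)
    (hfbr : ∀ k, IsFBRWith p q (f k) (b k) (dict k))
    (hdecomp : ∀ (P : Profile (hybridDomain p q) n) (a : Fin m),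
        (φ P).1 a = ∑ k, α k * (if f k P = a then 1 else 0)) :
    ∀ i : Fin n,
      ∑ k ∈ Finset.univ.filter (fun k => dict k = i), α k = 1 / (n : ℝ) := by
  have key : ∀ i : Fin n, ∑ k ∈ Finset.univ.filter (fun k => dict k = i), α k
      = ∑ a ∈ upSet q, (φ (oneProf p q hgap1 i)).1 a := by
    intro i
    simp_rw [hdecomp]
    rw [Finset.sum_comm, Finset.sum_filter]
    refine Finset.sum_congr rfl fun k _ => ?_
    rw [← Finset.mul_sum, Finset.sum_ite_eq]
    simp only [upSet, Finset.mem_filter, Finset.mem_univ, true_and,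
      fbr_one p q hgap1 i (dict k) (f k) (b k) (hfbr k)]
    split_ifs <;> simp
  have heq : ∀ i j : Fin n, φ (oneProf p q hgap1 i) = φ (oneProf p q hgap1 j) := by
    intro i j
    rw [← hanon (oneProf p q hgap1 j) (Equiv.swap i j)]
    congr 1
    funext k
    have : Equiv.swap i j k = j ↔ k = i := by
      rw [Equiv.swap_apply_eq_iff, Equiv.swap_apply_right]
    simp only [oneProf, Function.comp, this]
  intro i
  have htot : ∑ j : Fin n, ∑ k ∈ Finset.univ.filter (fun k => dict k = j), α k = 1 := by
    rw [← hsum]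
    exact Finset.sum_fiberwise _ _ _
  have hc : ∀ j : Fin n, ∑ k ∈ Finset.univ.filter (fun k => dict k = j), α k
      = ∑ k ∈ Finset.univ.filter (fun k => dict k = i), α k := by
    intro j
    rw [key, key, heq j i]
  rw [Finset.sum_congr rfl (fun j _ => hc j), Finset.sum_const, Finset.card_univ,
    Fintype.card_fin, nsmul_eq_mul] at htot
  have hn0 : (n : ℝ) ≠ 0 := by
    have : n ≠ 0 := by omega
    exact_mod_cast this
  rw [eq_div_iff hn0, mul_comm]
  exact htot
end
end

section
/- Let 1 ≤ p < q ≤ m with 1 < q − p < m − 1, and let (β_S)_{S⊆N} be the probabilistic ballots of a (p, q)-PFBR on [D_≺(p, q)]^n which is anonymous (β_S = β_{S′} for all nonempty S, S′ ⊆ N with |S| = |S′|, so every conditional dictatorial coefficient equals 1/n) and satisfies per-capita monotonicity w.r.t. a_p and a_q. Define α = min over nonempty S ⊂ N of min( β_S(b̂_S^R)/|S| , β_S(b̂_S^L)/(n − |S|) ), and suppose 0 < α < 1/n. For every S ⊆ N define γ_S = (|S|/n) e_{b̂_S^R} + ((n − |S|)/n) e_{b̂_S^L} (so γ_N = e_{a_m}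 and γ_∅ = e_{a_1}) and β̂_S = (β_S − α n γ_S)/(1 − α n). Then: (a) every β̂_S is a lottery over A; (b) the collection (β̂_S)_{S⊆N} satisfies ballot unanimity, monotonicity, the constrained random-dictatorship condition w.r.t. a_p and a_q with every coefficient equal to 1/n, and per-capita monotonicity w.r.t. a_p and a_q; and (c) supp(β̂_S) ⊆ supp(β_S) for every nonempty S ⊂ N, with strict inclusion for at least one nonempty S* ⊂ N. -/
open Finset

noncomputable section

open PFBRPaper

namespace PFBRPaper

variable {m n : ℕ}

theorem prob_nonneg' (l : Lottery m) (B : Finset (Fin m)) : 0 ≤ l.prob B :=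
  Finset.sum_nonneg (fun a _ => l.2.1 a)

theorem prob_mono' (l : Lottery m) {B C : Finset (Fin m)} (h : B ⊆ C) : l.prob B ≤ l.prob C :=
  Finset.sum_le_sum_of_subset_of_nonneg h (fun a _ _ => l.2.1 a)

theorem prob_univ' (l : Lottery m) : l.prob Finset.univ = 1 := l.2.2

theorem prob_le_one' (l : Lottery m) (B : Finset (Fin m)) : l.prob B ≤ 1 := by
  rw [← prob_univ' l]; exact prob_mono' l (Finset.subset_univ B)

theorem prob_add_le' (l : Lottery m) {B C E : Finset (Fin m)} (hd : Disjoint B C)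
    (h : B ∪ C ⊆ E) : l.prob B + l.prob C ≤ l.prob E := by
  have : l.prob B + l.prob C = l.prob (B ∪ C) := by
    unfold Lottery.prob; rw [Finset.sum_union hd]
  rw [this]; exact prob_mono' l h

theorem prob_single' (l : Lottery m) (a : Fin m) : l.prob {a} = l.1 a := by
  simp [Lottery.prob]

theorem prob_compl' (l : Lottery m) (B C : Finset (Fin m)) (hd : Disjoint B C)
    (h : B ∪ C = Finset.univ) : l.prob B + l.prob C = 1 := by
  rw [← prob_univ' l, ← h]; unfold Lottery.prob; rw [Finset.sum_union hd]

theorem prob_pos' (l : Lottery m) (B : Finset (Fin m)) (h : 0 < l.prob B) :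
    (l.supp ∩ B).Nonempty := by
  by_contra hne
  rw [Finset.not_nonempty_iff_eq_empty] at hne
  have : l.prob B ≤ 0 := by
    apply Finset.sum_nonpos
    intro a ha
    by_contra hc
    have : a ∈ l.supp ∩ B := by
      simp only [Lottery.supp, Finset.mem_inter, Finset.mem_filter, Finset.mem_univ, true_and]
      exact ⟨not_le.mp hc, ha⟩
    rw [hne] at this
    simp at this
  linarith

theorem prob_eq_of_zero' (l : Lottery m) {B C : Finset (Fin m)} (h : B ⊆ C)
    (hz : ∀ a ∈ C, a ∉ B → l.1 a = 0) : l.prob B = l.prob C :=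
  Finset.sum_subset h hz

theorem le_last' [NeZero m] (a : Fin m) : a ≤ lastAlt m := by
  have := a.2
  rw [Fin.le_def]; simp only [lastAlt]; omega

theorem q_le_bR [NeZero m] (β : Finset (Fin n) → Lottery m) (q : Fin m) (S : Finset (Fin n)) :
    q ≤ bR β q S := by
  unfold bR
  split_ifs with h
  · have := Finset.min'_mem _ h
    simp only [Finset.mem_inter, upSet, Finset.mem_filter] at this
    exact this.2.2
  · exact le_last' q

theorem bL_le_p [NeZero m] (β : Finset (Fin n) → Lottery m) (p : Fin m) (S : Finset (Fin n)) :
    bL β p S ≤ p := by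
  unfold bL
  split_ifs with h
  · have := Finset.max'_mem _ h
    simp only [Finset.mem_inter, downSet, Finset.mem_filter] at this
    exact this.2.2
  · exact Fin.zero_le p

theorem bR_spec [NeZero m] (β : Finset (Fin n) → Lottery m) (q : Fin m) (S : Finset (Fin n))
    (h : 0 < (β S).prob (upSet q)) :
    0 < (β S).1 (bR β q S) ∧ ∀ a, q ≤ a → a < bR β q S → (β S).1 a = 0 := by
  have hne := prob_pos' _ _ h
  unfold bR
  rw [dif_pos hne]
  constructor
  · have := Finset.min'_mem _ hne
    simp only [Finset.mem_inter, Lottery.supp, Finset.mem_filter] at this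
    exact this.1.2
  · intro a ha hlt
    by_contra hc
    have hpos : 0 < (β S).1 a := lt_of_le_of_ne ((β S).2.1 a) (Ne.symm hc)
    have hmem : a ∈ (β S).supp ∩ upSet q := by
      simp [Lottery.supp, upSet, hpos, ha]
    exact absurd (Finset.min'_le _ a hmem) (not_le.mpr hlt)

theorem bL_spec [NeZero m] (β : Finset (Fin n) → Lottery m) (p : Fin m) (S : Finset (Fin n))
    (h : 0 < (β S).prob (downSet p)) :
    0 < (β S).1 (bL β p S) ∧ ∀ a, a ≤ p → bL β p S < a → (β S).1 a = 0 := by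
  have hne := prob_pos' _ _ h
  unfold bL
  rw [dif_pos hne]
  constructor
  · have := Finset.max'_mem _ hne
    simp only [Finset.mem_inter, Lottery.supp, Finset.mem_filter] at this
    exact this.1.2
  · intro a ha hlt
    by_contra hc
    have hpos : 0 < (β S).1 a := lt_of_le_of_ne ((β S).2.1 a) (Ne.symm hc)
    have hmem : a ∈ (β S).supp ∩ downSet p := by
      simp [Lottery.supp, downSet, hpos, ha]
    exact absurd (Finset.le_max' _ a hmem) (not_le.mpr hlt)

theorem gamma_sum [NeZero m] (β : Finset (Fin n) → Lottery m) (p q : Fin m)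
    (S : Finset (Fin n)) (B : Finset (Fin m)) :
    ∑ a ∈ B, gammaFun β p q S a =
      ((S.card : ℝ) / n) * (if bR β q S ∈ B then 1 else 0)
      + (((n : ℝ) - S.card) / n) * (if bL β p S ∈ B then 1 else 0) := by
  unfold gammaFun
  rw [Finset.sum_add_distrib, ← Finset.mul_sum, ← Finset.mul_sum]
  simp only [Finset.sum_ite_eq']

theorem alpha_finite [NeZero m] (β : Finset (Fin n) → Lottery m) (p q : Fin m) :
    {x : ℝ | ∃ S : Finset (Fin n), S.Nonempty ∧ S ≠ Finset.univ ∧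
    x = min ((β S).1 (bR β q S) / (S.card : ℝ))
            ((β S).1 (bL β p S) / ((n : ℝ) - (S.card : ℝ)))}.Finite := by
  apply Set.Finite.subset (Set.finite_range (fun S : Finset (Fin n) =>
    min ((β S).1 (bR β q S) / (S.card : ℝ))
            ((β S).1 (bL β p S) / ((n : ℝ) - (S.card : ℝ)))))
  rintro x ⟨S, _, _, rfl⟩
  exact ⟨S, rfl⟩

theorem card_pos' (S : Finset (Fin n)) (h : S.Nonempty) : (0 : ℝ) < S.card := by
  exact_mod_cast h.card_pos

theorem card_lt' (S : Finset (Fin n)) (h : S ≠ Finset.univ) : (S.card : ℝ) < n := by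
  have := Finset.card_lt_card (Finset.ssubset_univ_iff.mpr h)
  rw [Finset.card_univ, Fintype.card_fin] at this
  exact_mod_cast this

theorem card_compl' (S : Finset (Fin n)) : ((Sᶜ : Finset (Fin n)).card : ℝ) = n - S.card := by
  have := Finset.card_add_card_compl S
  rw [Fintype.card_fin] at this
  have h2 : ((S.card : ℝ) + (Sᶜ : Finset (Fin n)).card) = n := by exact_mod_cast this
  linarith

theorem alpha_le [NeZero m] (β : Finset (Fin n) → Lottery m) (p q : Fin m) (S : Finset (Fin n))
    (h : S.Nonempty) (h' : S ≠ Finset.univ) :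
    alphaVal β p q * S.card ≤ (β S).1 (bR β q S) ∧
    alphaVal β p q * (n - S.card) ≤ (β S).1 (bL β p S) := by
  have h1 := csInf_le (alpha_finite β p q).bddBelow ⟨S, h, h', rfl⟩
  change alphaVal β p q ≤ _ at h1
  have h2 := card_pos' S h
  have h3 := card_lt' S h'
  rw [le_min_iff, le_div_iff₀ h2, le_div_iff₀ (by linarith)] at h1
  exact h1

theorem alpha_att [NeZero m] (hn : 2 ≤ n) (β : Finset (Fin n) → Lottery m) (p q : Fin m) :
    ∃ S : Finset (Fin n), S.Nonempty ∧ S ≠ Finset.univ ∧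
    (alphaVal β p q * S.card = (β S).1 (bR β q S) ∨
    alphaVal β p q * (n - S.card) = (β S).1 (bL β p S)) := by
  have hne : {x : ℝ | ∃ S : Finset (Fin n), S.Nonempty ∧ S ≠ Finset.univ ∧
    x = min ((β S).1 (bR β q S) / (S.card : ℝ))
            ((β S).1 (bL β p S) / ((n : ℝ) - (S.card : ℝ)))}.Nonempty := by
    refine ⟨_, {⟨0, by omega⟩}, by simp, ?_, rfl⟩
    intro h
    have := congrArg Finset.card h
    simp at this
    omega
  obtain ⟨S, h1, h2, h3⟩ := hne.csInf_mem (alpha_finite β p q)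
  change alphaVal β p q = _ at h3
  have h4 := card_pos' S h1
  have h5 := card_lt' S h2
  refine ⟨S, h1, h2, ?_⟩
  rcases min_choice ((β S).1 (bR β q S) / (S.card : ℝ))
            ((β S).1 (bL β p S) / ((n : ℝ) - (S.card : ℝ))) with h | h
  · left; rw [h3, h]; field_simp
  · right; rw [h3, h]; have : (n : ℝ) - S.card ≠ 0 := by linarith
    field_simp

theorem mem_up (k a : Fin m) : a ∈ upSet k ↔ k ≤ a := by simp [upSet]

theorem mem_down (k a : Fin m) : a ∈ downSet k ↔ a ≤ k := by simp [downSet]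

/-- Monotonicity follows from the other three properties. -/
theorem mono_of [NeZero m] (p q : Fin m) (hpq : p < q) (β : Finset (Fin n) → Lottery m)
    (hn : 0 < n)
    (hu : BallotUnanimity β) (hcrd : ConstrainedRDUniform p q β)
    (hpcm : PerCapitaMonotone p q β) : BallotMonotone β := by
  have hnR : (0 : ℝ) < n := by exact_mod_cast hn
  intro S T hST k
  have hcard : (S.card : ℝ) ≤ T.card := by exact_mod_cast Finset.card_le_card hST.1
  by_cases hk0 : k = 0
  · subst hk0
    have : upSet (0 : Fin m) = Finset.univ := by ext a; simp [upSet]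
    rw [this, prob_univ', prob_univ']
  by_cases hT : T = Finset.univ
  · have : (β T).prob (upSet k) = 1 := by
      rw [hT, hu.1]
      simp [Lottery.prob, degLottery, mem_up, le_last']
    rw [this]; exact prob_le_one' _ _
  by_cases hS : S = ∅
  · have : (β S).prob (upSet k) = 0 := by
      rw [hS, hu.2]
      simp [Lottery.prob, degLottery, mem_up, hk0]
    rw [this]; exact prob_nonneg' _ _
  have hSne : S.Nonempty := Finset.nonempty_iff_ne_empty.mpr hS
  have hTss : T ⊂ Finset.univ := Finset.ssubset_univ_iff.mpr hT
  have hs := card_pos' S hSne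
  have ht := card_lt' T hT
  by_cases hkq : q ≤ k
  · have h := (hpcm S T hSne hST hTss).1 k hkq
    have hx := prob_nonneg' (β S) (upSet k)
    have htp : (0 : ℝ) < T.card := by linarith
    rw [div_le_div_iff₀ hs htp] at h
    have h0 := prob_nonneg' (β S) (upSet k)
    nlinarith
  · push Not at hkq
    have hk1 : 0 < (k : ℕ) := Nat.pos_of_ne_zero (fun h => hk0 (Fin.ext (by simpa using h)))
    have hkm := k.2
    obtain ⟨j, hj⟩ : ∃ j : Fin m, (j : ℕ) + 1 = k := ⟨⟨k - 1, by omega⟩, by simp; omega⟩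
    have hud : ∀ U, (β U).prob (upSet k) + (β U).prob (downSet j) = 1 := by
      intro U
      apply prob_compl'
      · rw [Finset.disjoint_left]; intro a; rw [mem_up, mem_down, Fin.le_def, Fin.le_def]; omega
      · ext a; rw [Finset.mem_union, mem_up, mem_down, Fin.le_def, Fin.le_def]; simp; omega
    by_cases hkp : k ≤ p
    · have hTc : (Tᶜ).Nonempty := by
        rw [Finset.nonempty_iff_ne_empty]; simpa using hT
      have hSc : Sᶜ ⊂ Finset.univ := by
        rw [Finset.ssubset_univ_iff]; simpa using hS
      have h := (hpcm Tᶜ Sᶜ hTc (Finset.compl_ssubset_compl.mpr hST) hSc).2 j (by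
        rw [Fin.le_def] at *; omega)
      rw [compl_compl, compl_compl, card_compl', card_compl',
        div_le_div_iff₀ (by linarith) (by linarith)] at h
      have h0 := prob_nonneg' (β T) (downSet j)
      have := hud S
      have := hud T
      nlinarith
    · push Not at hkp
      have key : ∀ U, (β U).prob (upSet k) = U.card / n := by
        intro U
        have h1 := hcrd U
        have h2 : (β U).prob (upSet q) ≤ (β U).prob (upSet k) := prob_mono' _ (by
          intro a; rw [mem_up, mem_up]; exact fun h => le_trans hkq.le h)
        have h3 : (β U).prob (downSet p) ≤ (β U).prob (downSet j) := prob_mono' _ (by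
          intro a; rw [mem_down, mem_down, Fin.le_def, Fin.le_def]; rw [Fin.lt_def] at hkp; omega)
        have h4 := hud U
        rw [h1.1] at h2
        rw [h1.2, card_compl', sub_div, div_self hnR.ne'] at h3
        linarith
      rw [key, key]
      gcongr

end PFBRPaper

/-- The refinement step: when `0 < α < 1/n`, the refined ballots
`β̂_S = (β_S - αn γ_S)/(1 - αn)` are lotteries satisfying ballot unanimity, monotonicity,
the uniform constrained random-dictatorship condition and per-capita monotonicity, and
their supports refine those of `β` (strictly for at least one nonempty proper coalition). -/
theorem refinement_step (m n : ℕ) [NeZero m] (hm : 3 ≤ m) (hn : 2 ≤ n)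
    (p q : Fin m) (hgap1 : (p : ℕ) + 1 < (q : ℕ)) (hgap2 : (q : ℕ) - (p : ℕ) < m - 1)
    (φ : Profile (hybridDomain p q) n → Lottery m)
    (β : Finset (Fin n) → Lottery m) (hβ : IsPFBRWith φ β)
    (hanon : BallotAnonymous β) (hcrd : ConstrainedRDUniform p q β)
    (hpcm : PerCapitaMonotone p q β)
    (hα1 : 0 < alphaVal β p q) (hα2 : alphaVal β p q < 1 / (n : ℝ)) :
    ∃ βhat : Finset (Fin n) → Lottery m,
      (∀ (S : Finset (Fin n)) (a : Fin m),
        (βhat S).1 a = ((β S).1 a - (n : ℝ) * alphaVal β p q * gammaFun β p q S a)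
          / (1 - (n : ℝ) * alphaVal β p q)) ∧
      BallotUnanimity βhat ∧ BallotMonotone βhat ∧
      ConstrainedRDUniform p q βhat ∧ PerCapitaMonotone p q βhat ∧
      (∀ S : Finset (Fin n), S.Nonempty → S ≠ Finset.univ →
        (βhat S).supp ⊆ (β S).supp) ∧
      (∃ S : Finset (Fin n), S.Nonempty ∧ S ≠ Finset.univ ∧
        (βhat S).supp ⊂ (β S).supp) := by
  have hnR : (0 : ℝ) < n := by exact_mod_cast (by omega : 0 < n)
  have hpq : p < q := by rw [Fin.lt_def]; omega
  set α := alphaVal β p q with hα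
  have hd : 0 < 1 - (n : ℝ) * α := by
    rw [lt_div_iff₀ hnR] at hα2; linarith
  have hupos : ∀ S : Finset (Fin n), S.Nonempty → 0 < (β S).prob (upSet q) := by
    intro S hS; rw [(hcrd S).1]; exact div_pos (card_pos' S hS) hnR
  have hdpos : ∀ S : Finset (Fin n), S ≠ Finset.univ → 0 < (β S).prob (downSet p) := by
    intro S hS; rw [(hcrd S).2, card_compl']
    exact div_pos (by linarith [card_lt' S hS]) hnR
  have hne : (Finset.univ : Finset (Fin n)).Nonempty := ⟨⟨0, by omega⟩, Finset.mem_univ _⟩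
  have hbRu : bR β q Finset.univ = lastAlt m := by
    have h := (bR_spec β q _ (hupos Finset.univ hne)).1
    rw [hβ.1.1] at h
    by_contra hc
    simp [degLottery, hc] at h
  have hbLe : bL β p ∅ = 0 := by
    have h := (bL_spec β p _ (hdpos ∅ hne.ne_empty.symm)).1
    rw [hβ.1.2] at h
    by_contra hc
    simp [degLottery, hc] at h
  -- bounds valid for every coalition
  have hbR : ∀ S : Finset (Fin n), α * S.card ≤ (β S).1 (bR β q S) := by
    intro S
    by_cases h1 : S.Nonempty
    · by_cases h2 : S = Finset.univ
      · subst h2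
        rw [hbRu, hβ.1.1]
        simp [degLottery]
        linarith
      · exact (alpha_le β p q S h1 h2).1
    · rw [Finset.not_nonempty_iff_eq_empty] at h1
      subst h1
      simpa using (β ∅).2.1 _
  have hbL : ∀ S : Finset (Fin n), α * (n - S.card) ≤ (β S).1 (bL β p S) := by
    intro S
    by_cases h2 : S = Finset.univ
    · subst h2
      simpa using (β _).2.1 _
    · by_cases h1 : S.Nonempty
      · exact (alpha_le β p q S h1 h2).2
      · rw [Finset.not_nonempty_iff_eq_empty] at h1
        subst h1
        rw [hbLe, hβ.1.2]
        simp [degLottery]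
        linarith
  have hRL : ∀ S, bL β p S < bR β q S := fun S =>
    lt_of_le_of_lt (bL_le_p β p S) (lt_of_lt_of_le hpq (q_le_bR β q S))
  have hgam : ∀ S a, n * α * gammaFun β p q S a
      = α * S.card * (if a = bR β q S then 1 else 0)
        + α * (n - S.card) * (if a = bL β p S then 1 else 0) := by
    intro S a; unfold gammaFun; field_simp
  have hgnn : ∀ S a, 0 ≤ n * α * gammaFun β p q S a := by
    intro S a
    rw [hgam]
    have h1 : (0 : ℝ) ≤ S.card := by positivity
    have h2 : (S.card : ℝ) ≤ n := by
      have := Finset.card_le_univ S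
      rw [Fintype.card_fin] at this
      exact_mod_cast this
    have h3 : (0 : ℝ) ≤ n - S.card := by linarith
    positivity
  have hle : ∀ S a, n * α * gammaFun β p q S a ≤ (β S).1 a := by
    intro S a
    rw [hgam]
    by_cases h1 : a = bR β q S
    · have h2 : a ≠ bL β p S := by rw [h1]; exact (hRL S).ne'
      rw [if_pos h1, if_neg h2, h1]
      linarith [hbR S]
    · by_cases h2 : a = bL β p S
      · rw [if_neg h1, if_pos h2, h2]
        linarith [hbL S]
      · rw [if_neg h1, if_neg h2]
        linarith [(β S).2.1 a]
  have hsum : ∀ S B, ∑ a ∈ B, ((β S).1 a - (n : ℝ) * α * gammaFun β p q S a)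
      / (1 - (n : ℝ) * α) = ((β S).prob B - α * (S.card * (if bR β q S ∈ B then 1 else 0)
        + (n - S.card) * (if bL β p S ∈ B then 1 else 0))) / (1 - n * α) := by
    intro S B
    rw [← Finset.sum_div, Finset.sum_sub_distrib, ← Finset.mul_sum, gamma_sum]
    unfold Lottery.prob
    congr 2
    field_simp
  let bh : Finset (Fin n) → Lottery m := fun S =>
    ⟨fun a => ((β S).1 a - (n : ℝ) * α * gammaFun β p q S a) / (1 - (n : ℝ) * α),
      fun a => div_nonneg (sub_nonneg.mpr (hle S a)) hd.le, by
        rw [hsum, prob_univ', div_eq_one_iff_eq hd.ne']; simp; ring⟩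
  have hval : ∀ S a, (bh S).1 a
    = ((β S).1 a - (n : ℝ) * α * gammaFun β p q S a) / (1 - (n : ℝ) * α) := fun _ _ => rfl
  have hprob : ∀ S B, (bh S).prob B =
      ((β S).prob B - α * (S.card * (if bR β q S ∈ B then 1 else 0)
        + (n - S.card) * (if bL β p S ∈ B then 1 else 0))) / (1 - n * α) := hsum
  have hU : BallotUnanimity bh := by
    constructor
    · apply Subtype.ext
      funext a
      rw [hval, hgam, hbRu, hβ.1.1]
      by_cases h : a = lastAlt m
      · simp [degLottery, h]; rw [div_eq_one_iff_eq hd.ne']; ring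
      · simp [degLottery, h]
    · apply Subtype.ext
      funext a
      rw [hval, hgam, hbLe, hβ.1.2]
      by_cases h : a = 0
      · simp [degLottery, h]; rw [div_eq_one_iff_eq hd.ne']; ring
      · simp [degLottery, h]
  -- probability of upper / lower tails
  have hup : ∀ S t, q ≤ t → (bh S).prob (upSet t) =
      ((β S).prob (upSet t) - α * (S.card * (if t ≤ bR β q S then 1 else 0))) / (1 - n * α) := by
    intro S t ht
    rw [hprob]
    have : ¬ t ≤ bL β p S := not_le.mpr
      (lt_of_le_of_lt (bL_le_p β p S) (lt_of_lt_of_le hpq ht))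
    simp only [mem_up, this, if_false, mul_zero, add_zero]
  have hdn : ∀ S t, t ≤ p → (bh S).prob (downSet t) =
      ((β S).prob (downSet t) - α * ((n - S.card) * (if bL β p S ≤ t then 1 else 0)))
        / (1 - n * α) := by
    intro S t ht
    rw [hprob]
    have : ¬ bR β q S ≤ t := not_le.mpr
      (lt_of_le_of_lt ht (lt_of_lt_of_le hpq (q_le_bR β q S)))
    simp only [mem_down, this, if_false, mul_zero, zero_add]
  have hC : ConstrainedRDUniform p q bh := by
    intro S
    rw [hup S q le_rfl, hdn S p le_rfl, (hcrd S).1, (hcrd S).2, if_pos (q_le_bR β q S),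
      if_pos (bL_le_p β p S), card_compl', div_eq_iff hd.ne', div_eq_iff hd.ne']
    constructor <;> field_simp
  have hP : PerCapitaMonotone p q bh := by
    intro S T hS hST hT
    have hs := card_pos' S hS
    have ht := card_pos' T (hS.mono hST.1)
    obtain ⟨hp1, hp2⟩ := hpcm S T hS hST hT
    constructor
    · intro t hqt
      rw [hup S t hqt, hup T t hqt, div_right_comm, div_right_comm _ _ (T.card : ℝ)]
      apply div_le_div_of_nonneg_right _ hd.le
      have h := hp1 t hqt
      have e : ∀ x y z : ℝ, 0 < y → (x - α * (y * z)) / y = x / y - α * z := by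
        intro x y z hy; field_simp
      rw [e _ _ _ hs, e _ _ _ ht]
      by_cases c1 : t ≤ bR β q T
      · by_cases c2 : t ≤ bR β q S
        · rw [if_pos c1, if_pos c2]; linarith
        · rw [if_pos c1, if_neg c2]
          have e1 : (β T).prob (upSet t) = T.card / n := by
            rw [← (hcrd T).1]
            apply prob_eq_of_zero'
            · intro a; rw [mem_up, mem_up]; exact fun h => le_trans hqt h
            · intro a h1 h2
              rw [mem_up] at h1 h2
              exact (bR_spec β q T (hupos T (hS.mono hST.1))).2 a h1
                (lt_of_lt_of_le (not_le.mp h2) c1)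
          have e2 : (β S).prob (upSet t) + (β S).1 (bR β q S) ≤ S.card / n := by
            rw [← (hcrd S).1, ← prob_single']
            apply prob_add_le'
            · rw [Finset.disjoint_singleton_right, mem_up]; exact c2
            · intro a; rw [Finset.mem_union, mem_up, mem_up, Finset.mem_singleton]
              rintro (h | h)
              · exact le_trans hqt h
              · rw [h]; exact q_le_bR β q S
          have e3 := hbR S
          have e4 : (β S).prob (upSet t) / S.card ≤ 1 / n - α := by
            rw [div_le_iff₀ hs]
            have : (1 / n - α) * S.card = S.card / n - α * S.card := by ring
            linarith
          have e5 : (β T).prob (upSet t) / T.card = 1 / n := by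
            rw [e1]; field_simp
          linarith
      · rw [if_neg c1]
        have : 0 ≤ α * (if t ≤ bR β q S then (1 : ℝ) else 0) := by positivity
        linarith
    · intro t htp
      have hSu : Sᶜ ≠ Finset.univ := by simpa using hS.ne_empty
      have hTu : Tᶜ ≠ Finset.univ := by simpa using (hS.mono hST.1).ne_empty
      rw [hdn Sᶜ t htp, hdn Tᶜ t htp, div_right_comm, div_right_comm _ _ (T.card : ℝ)]
      apply div_le_div_of_nonneg_right _ hd.le
      have h := hp2 t htp
      have e : ∀ x y z : ℝ, 0 < y → (x - α * (y * z)) / y = x / y - α * z := by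
        intro x y z hy; field_simp
      have eS : (n : ℝ) - (Sᶜ : Finset (Fin n)).card = S.card := by rw [card_compl']; ring
      have eT : (n : ℝ) - (Tᶜ : Finset (Fin n)).card = T.card := by rw [card_compl']; ring
      rw [eS, eT, e _ _ _ hs, e _ _ _ ht]
      by_cases c1 : bL β p Tᶜ ≤ t
      · by_cases c2 : bL β p Sᶜ ≤ t
        · rw [if_pos c1, if_pos c2]; linarith
        · rw [if_pos c1, if_neg c2]
          have e1 : (β Tᶜ).prob (downSet t) = T.card / n := by
            have := (hcrd Tᶜ).2
            rw [compl_compl] at this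
            rw [← this]
            apply prob_eq_of_zero'
            · intro a; rw [mem_down, mem_down]; exact fun h => le_trans h htp
            · intro a h1 h2
              rw [mem_down] at h1 h2
              exact (bL_spec β p Tᶜ (hdpos _ hTu)).2 a h1
                (lt_of_le_of_lt c1 (not_le.mp h2))
          have e2 : (β Sᶜ).prob (downSet t) + (β Sᶜ).1 (bL β p Sᶜ) ≤ S.card / n := by
            have := (hcrd Sᶜ).2
            rw [compl_compl] at this
            rw [← this, ← prob_single']
            apply prob_add_le'
            · rw [Finset.disjoint_singleton_right, mem_down]; exact c2
            · intro a; rw [Finset.mem_union, mem_down, mem_down, Finset.mem_singleton]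
              rintro (h | h)
              · exact le_trans h htp
              · rw [h]; exact bL_le_p β p Sᶜ
          have e3 := hbL Sᶜ
          rw [eS] at e3
          have e4 : (β Sᶜ).prob (downSet t) / S.card ≤ 1 / n - α := by
            rw [div_le_iff₀ hs]
            have : (1 / n - α) * S.card = S.card / n - α * S.card := by ring
            linarith
          have e5 : (β Tᶜ).prob (downSet t) / T.card = 1 / n := by
            rw [e1]; field_simp
          linarith
      · rw [if_neg c1]
        have : 0 ≤ α * (if bL β p Sᶜ ≤ t then (1 : ℝ) else 0) := by positivity
        linarith
  have hsupp : ∀ S, (bh S).supp ⊆ (β S).supp := by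
    intro S a
    simp only [Lottery.supp, Finset.mem_filter, Finset.mem_univ, true_and]
    rw [hval]
    intro h
    have := (div_pos_iff_of_pos_right hd).mp h
    linarith [hgnn S a]
  refine ⟨bh, hval, hU, mono_of p q hpq bh (by omega) hU hC hP, hC, hP,
    fun S _ _ => hsupp S, ?_⟩
  obtain ⟨S, h1, h2, h3⟩ := alpha_att hn β p q
  refine ⟨S, h1, h2, ?_⟩
  rw [Finset.ssubset_iff_of_subset (hsupp S)]
  rcases h3 with h3 | h3
  · refine ⟨bR β q S, ?_, ?_⟩
    · simpa [Lottery.supp] using (bR_spec β q S (hupos S h1)).1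
    · simp only [Lottery.supp, Finset.mem_filter, Finset.mem_univ, true_and]
      rw [hval, hgam, if_pos rfl, if_neg (hRL S).ne', ← h3]
      simp [hα]
  · refine ⟨bL β p S, ?_, ?_⟩
    · simpa [Lottery.supp] using (bL_spec β p S (hdpos S h2)).1
    · simp only [Lottery.supp, Finset.mem_filter, Finset.mem_univ, true_and]
      rw [hval, hgam, if_pos rfl, if_neg (hRL S).ne, ← h3]
      simp [hα]
end
end
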